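/- Let f ∈ F_2[x] be a monic irreducible polynomial of type (D,n) with n > 1. Then f^Q splits as f^Q = g_1 · g_2, where g_1 and g_2 are distinct monic irreducible polynomials of degree n over F_2 with g_2 = g_1* (the reciprocal of g_1), and either g_1 and g_2 are both of type (A,n) or they are both of type (D,n). -/

import Mathlib

open Polynomial

noncomputable def Qtrans (f : Polynomial (ZMod 2)) : Polynomial (ZMod 2) :=
  ∑ i ∈ Finset.range (f.natDegree + 1),
    C (f.coeff i) * X ^ (f.natDegree - i) * (X ^ 2 + 1) ^ i

/-!
Let `a` be a root of `f` in `K = 𝔽₂(a)`. The roots of `f^Q` in `K` are the solutions of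
`b + b⁻¹ = a`; putting `b = a * z` turns this equation into `z ^ 2 - z = a⁻¹ ^ 2`, which by the
additive Hilbert 90 is solvable exactly when `a⁻¹`, whose trace is the coefficient of `x` in `f`,
has trace zero. Then `f^Q` is the product of the minimal polynomials of `b` and `b⁻¹`, and these
are reciprocal to each other. They are distinct, since an automorphism carrying `b` to `b⁻¹` would
fix the generator `a` and hence `b`. All coefficients in question equal `Tr b` or `Tr b⁻¹`, and
`Tr b + Tr b⁻¹ = Tr a = 0`.
-/

open IntermediateField

section SimpleExtension

variable {F K : Type*} [Field F] [Field K] [Algebra F K]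

theorem adjoin_inv_eq_top {b : K} (hb : F⟮b⟯ = ⊤) : F⟮b⁻¹⟯ = ⊤ := by
  rw [eq_top_iff, ← hb, adjoin_simple_le_iff]
  simpa using inv_mem (mem_adjoin_simple_self F b⁻¹)

theorem adjoin_eq_top_of_adjoin_add_inv_eq_top {b : K} (h : F⟮b + b⁻¹⟯ = ⊤) : F⟮b⟯ = ⊤ := by
  rw [eq_top_iff, ← h, adjoin_simple_le_iff]
  exact add_mem (mem_adjoin_simple_self F b) (inv_mem (mem_adjoin_simple_self F b))

theorem isCoprime_minpoly_of_ne {x y : K} (hx : IsIntegral F x) (hy : IsIntegral F y)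
    (hne : minpoly F x ≠ minpoly F y) : IsCoprime (minpoly F x) (minpoly F y) := by
  have hx_irr := minpoly.irreducible hx
  refine hx_irr.coprime_iff_not_dvd.mpr fun hdvd ↦ hne ?_
  exact eq_of_monic_of_associated (minpoly.monic hx) (minpoly.monic hy)
    (hx_irr.associated_of_dvd (minpoly.irreducible hy) hdvd)

theorem ne_zero_of_one_lt_natDegree_minpoly {x : K} (hx : 1 < (minpoly F x).natDegree) :
    x ≠ 0 := by
  rintro rfl
  rw [minpoly.zero, natDegree_X] at hx
  exact hx.false

theorem minpoly_inv_dvd_reverse {b : K} (hb : b ≠ 0) :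
    minpoly F b⁻¹ ∣ (minpoly F b).reverse := by
  let := invertibleOfNonzero hb
  refine minpoly.dvd F _ ?_
  rw [← invOf_eq_inv]
  exact (eval₂_reverse_eq_zero_iff _ _ _).mpr (minpoly.aeval F b)

theorem natDegree_minpoly_inv_le {b : K} (hb : IsIntegral F b) :
    (minpoly F b⁻¹).natDegree ≤ (minpoly F b).natDegree := by
  obtain rfl | hb0 := eq_or_ne b 0
  · rw [inv_zero]
  · have hrev : (minpoly F b).reverse ≠ 0 := by
      simpa only [ne_eq, reverse_eq_zero] using minpoly.ne_zero hb
    exact (natDegree_le_of_dvd (minpoly_inv_dvd_reverse hb0) hrev).trans (reverse_natDegree_le _)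

theorem minpoly_inv {b : K} (hb : IsIntegral F b) (hb0 : b ≠ 0) :
    minpoly F b⁻¹ = C ((minpoly F b).coeff 0)⁻¹ * (minpoly F b).reverse := by
  have hcoeff : (minpoly F b).coeff 0 ≠ 0 := minpoly.coeff_zero_ne_zero hb hb0
  have hlead : (minpoly F b).reverse.leadingCoeff = (minpoly F b).coeff 0 := by
    rw [reverse_leadingCoeff, trailingCoeff_eq_coeff_zero hcoeff]
  refine (eq_of_monic_of_dvd_of_natDegree_le (minpoly.monic hb.inv)
    (monic_C_mul_of_mul_leadingCoeff_eq_one ?_)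
    ((minpoly_inv_dvd_reverse hb0).mul_left _) ?_).symm
  · rw [hlead, inv_mul_cancel₀ hcoeff]
  · rw [natDegree_C_mul (inv_ne_zero hcoeff)]
    refine (reverse_natDegree_le _).trans ?_
    simpa only [inv_inv] using natDegree_minpoly_inv_le hb.inv

theorem minpoly_ne_minpoly_inv [Normal F K] {b : K} (hgen : F⟮b + b⁻¹⟯ = ⊤) (hb : b ≠ b⁻¹) :
    minpoly F b ≠ minpoly F b⁻¹ := by
  intro h
  obtain ⟨σ, hσ : σ b = b⁻¹⟩ := (Normal.minpoly_eq_iff_mem_orbit K).mp h.symm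
  have hfix : σ (b + b⁻¹) = b + b⁻¹ := by rw [map_add, map_inv₀, hσ, inv_inv, add_comm]
  have hσb : σ b = b :=
    (forall_mem_adjoin_smul_eq_self_iff F σ).mpr (by simpa using hfix) b (hgen ▸ mem_top)
  exact hb (hσb.symm.trans hσ)

variable [FiniteDimensional F K]

theorem trace_eq_neg_nextCoeff_minpoly {b : K} (hb : F⟮b⟯ = ⊤) :
    Algebra.trace F K b = -(minpoly F b).nextCoeff := by
  rw [trace_eq_finrank_mul_minpoly_nextCoeff, hb, IntermediateField.finrank_top, Nat.cast_one,
    one_mul]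

theorem coeff_finrank_sub_one_minpoly {b : K} (hb : F⟮b⟯ = ⊤) :
    (minpoly F b).coeff (Module.finrank F K - 1) = -Algebra.trace F K b := by
  rw [trace_eq_neg_nextCoeff_minpoly hb, neg_neg,
    nextCoeff_of_natDegree_pos (minpoly.natDegree_pos (.of_finite F b)),
    (Field.primitive_element_iff_minpoly_natDegree_eq F b).mp hb]

theorem coeff_one_minpoly {b : K} (hb : F⟮b⟯ = ⊤) (hb0 : b ≠ 0) :
    (minpoly F b).coeff 1 = -(minpoly F b).coeff 0 * Algebra.trace F K b⁻¹ := by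
  have hinv := minpoly_inv (.of_finite F b⁻¹) (inv_ne_zero hb0)
  have hmonic : (minpoly F b⁻¹).leadingCoeff = 1 := minpoly.monic (.of_finite F b⁻¹)
  rw [inv_inv] at hinv
  rw [hinv, coeff_C_mul, coeff_C_mul, coeff_one_reverse, coeff_zero_reverse, hmonic, mul_one,
    trace_eq_neg_nextCoeff_minpoly (adjoin_inv_eq_top hb), neg_mul_neg]

end SimpleExtension

section FiniteField

variable (F K : Type*) [Field F] [Fintype F] [Field K] [Algebra F K] [FiniteDimensional F K]

theorem trace_pow_card (x : K) :
    Algebra.trace F K (x ^ Fintype.card F) = Algebra.trace F K x :=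
  Algebra.trace_eq_of_algEquiv (FiniteField.frobeniusAlgEquivOfAlgebraic F K) x

theorem mem_range_algebraMap_of_pow_card_eq {x : K} (hx : x ^ Fintype.card F = x) :
    x ∈ Set.range (algebraMap F K) := by
  have : Finite K := Module.finite_of_finite F
  refine (IsGalois.mem_range_algebraMap_iff_fixed x).mpr fun σ ↦ ?_
  obtain ⟨k, rfl⟩ := (FiniteField.bijective_frobeniusAlgEquivOfAlgebraic_pow F K).surjective σ
  have hfrob : FiniteField.frobeniusAlgEquivOfAlgebraic F K ∈ MulAction.stabilizer Gal(K/F) x := hx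
  exact pow_mem hfrob k

/-- Additive Hilbert 90 for the cyclic extension `K / F`, by comparing dimensions. -/
theorem range_frobenius_sub_id_eq_ker_trace :
    LinearMap.range ((FiniteField.frobeniusAlgHom F K).toLinearMap - LinearMap.id) =
      LinearMap.ker (Algebra.trace F K) := by
  set φ := (FiniteField.frobeniusAlgHom F K).toLinearMap - LinearMap.id
  have hφ (z : K) : φ z = z ^ Fintype.card F - z := rfl
  have hrange : LinearMap.range φ ≤ LinearMap.ker (Algebra.trace F K) := by
    rintro _ ⟨z, rfl⟩
    rw [LinearMap.mem_ker, hφ, map_sub, trace_pow_card, sub_self]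
  have hker : LinearMap.ker φ ≤ F ∙ (1 : K) := by
    intro z hz
    obtain ⟨c, rfl⟩ := mem_range_algebraMap_of_pow_card_eq F K (sub_eq_zero.mp hz)
    exact Submodule.mem_span_singleton.mpr ⟨c, (Algebra.algebraMap_eq_smul_one c).symm⟩
  have hker_finrank := Submodule.finrank_mono hker
  rw [finrank_span_singleton one_ne_zero] at hker_finrank
  have hφ_finrank := φ.finrank_range_add_finrank_ker
  have htrace_finrank := (Algebra.trace F K).finrank_range_add_finrank_ker
  rw [LinearMap.range_eq_top.mpr (Algebra.trace_surjective F K), finrank_top,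
    Module.finrank_self] at htrace_finrank
  exact Submodule.eq_of_le_of_finrank_le hrange (by lia)

end FiniteField

theorem eq_one_of_ne_zero_zmod_two : ∀ {c : ZMod 2}, c ≠ 0 → c = 1 := by
  decide

section Qtrans

theorem coeff_zero_Qtrans (f : (ZMod 2)[X]) : (Qtrans f).coeff 0 = f.leadingCoeff := by
  have hlower : ∀ i ∈ Finset.range f.natDegree,
      eval 0 (C (f.coeff i) * X ^ (f.natDegree - i) * (X ^ 2 + 1) ^ i) = 0 := fun i hi ↦ by
    simp [Nat.sub_ne_zero_of_lt (Finset.mem_range.mp hi)]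
  rw [coeff_zero_eq_eval_zero, Qtrans, eval_finsetSum, Finset.sum_range_succ,
    Finset.sum_eq_zero hlower]
  simp

theorem natDegree_Qtrans_le (f : (ZMod 2)[X]) : (Qtrans f).natDegree ≤ 2 * f.natDegree := by
  refine natDegree_sum_le_of_forall_le _ _ fun i hi ↦ ?_
  have hi := Finset.mem_range_succ_iff.mp hi
  calc _ ≤ (f.natDegree - i) + i * 2 := by compute_degree!
    _ ≤ 2 * f.natDegree := by lia

theorem aeval_Qtrans {A : Type*} [CommRing A] [Algebra (ZMod 2) A] (f : (ZMod 2)[X]) {a b : A}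
    (hab : b * a = b ^ 2 + 1) : aeval b (Qtrans f) = b ^ f.natDegree * aeval a f := by
  rw [Qtrans, map_sum, aeval_eq_sum_range, Finset.mul_sum]
  refine Finset.sum_congr rfl fun i hi ↦ ?_
  have hi := Finset.mem_range_succ_iff.mp hi
  simp only [map_mul, map_pow, map_add, aeval_X, aeval_C, map_one, Algebra.smul_def, ← hab,
    mul_pow]
  rw [← pow_sub_mul_pow b hi]
  ring

theorem monic_Qtrans {f : (ZMod 2)[X]} (hf : f.Monic) : (Qtrans f).Monic := by
  refine eq_one_of_ne_zero_zmod_two (leadingCoeff_ne_zero.mpr fun h ↦ ?_)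
  simpa [h, hf.leadingCoeff] using coeff_zero_Qtrans f

end Qtrans

section BinaryField

variable {K : Type*} [Field K] [Algebra (ZMod 2) K] {a b : K}

theorem coeff_zero_minpoly_zmod_two (hb : IsIntegral (ZMod 2) b) (hb0 : b ≠ 0) :
    (minpoly (ZMod 2) b).coeff 0 = 1 :=
  eq_one_of_ne_zero_zmod_two (minpoly.coeff_zero_ne_zero hb hb0)

theorem minpoly_inv_zmod_two (hb : IsIntegral (ZMod 2) b) (hb0 : b ≠ 0) :
    minpoly (ZMod 2) b⁻¹ = (minpoly (ZMod 2) b).reverse := by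
  rw [minpoly_inv hb hb0, coeff_zero_minpoly_zmod_two hb hb0, inv_one, C_1, one_mul]

variable [FiniteDimensional (ZMod 2) K]

theorem exists_add_inv_eq (ha : a ≠ 0) (htr : Algebra.trace (ZMod 2) K a⁻¹ = 0) :
    ∃ b : K, b + b⁻¹ = a := by
  have : CharP K 2 := charP_of_injective_algebraMap' (ZMod 2) 2
  have htr_sq : a⁻¹ ^ 2 ∈ LinearMap.ker (Algebra.trace (ZMod 2) K) := by
    rw [LinearMap.mem_ker, ← htr]
    exact trace_pow_card (ZMod 2) K a⁻¹
  obtain ⟨z, hz⟩ : ∃ z : K, z ^ 2 - z = a⁻¹ ^ 2 := by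
    rwa [← range_frobenius_sub_id_eq_ker_trace] at htr_sq
  have hz0 : z ≠ 0 := by
    rintro rfl
    exact ha (by simpa using hz.symm)
  have hquad : (a * z) ^ 2 + 1 = a * (a * z) := by
    field_simp at hz
    linear_combination hz + CharTwo.two_eq_zero (R := K)
  refine ⟨a * z, ?_⟩
  field_simp
  linear_combination hquad

theorem coeff_one_minpoly_zmod_two (hb : (ZMod 2)⟮b⟯ = ⊤) (hb0 : b ≠ 0) :
    (minpoly (ZMod 2) b).coeff 1 = Algebra.trace (ZMod 2) K b⁻¹ := by
  rw [coeff_one_minpoly hb hb0, coeff_zero_minpoly_zmod_two (.of_finite _ b) hb0, CharTwo.neg_eq,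
    one_mul]

theorem coeff_finrank_sub_one_minpoly_zmod_two (hb : (ZMod 2)⟮b⟯ = ⊤) :
    (minpoly (ZMod 2) b).coeff (Module.finrank (ZMod 2) K - 1) = Algebra.trace (ZMod 2) K b := by
  rw [coeff_finrank_sub_one_minpoly hb, CharTwo.neg_eq]

theorem Qtrans_minpoly_add_inv (hgen : (ZMod 2)⟮b + b⁻¹⟯ = ⊤) (hb : b ≠ b⁻¹) :
    Qtrans (minpoly (ZMod 2) (b + b⁻¹)) = minpoly (ZMod 2) b * minpoly (ZMod 2) b⁻¹ := by
  have : Finite K := Module.finite_of_finite (ZMod 2)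
  have hb0 : b ≠ 0 := fun h ↦ hb (by rw [h, inv_zero])
  have hint (x : K) : IsIntegral (ZMod 2) x := .of_finite _ x
  have hdeg {x : K} (hx : (ZMod 2)⟮x⟯ = ⊤) :
      (minpoly (ZMod 2) x).natDegree = Module.finrank (ZMod 2) K :=
    (Field.primitive_element_iff_minpoly_natDegree_eq _ x).mp hx
  have hroot {x : K} (hx : x * (b + b⁻¹) = x ^ 2 + 1) :
      minpoly (ZMod 2) x ∣ Qtrans (minpoly (ZMod 2) (b + b⁻¹)) :=
    minpoly.dvd _ _ (by rw [aeval_Qtrans _ hx, minpoly.aeval, mul_zero])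
  have hcoprime := isCoprime_minpoly_of_ne (hint b) (hint _) (minpoly_ne_minpoly_inv hgen hb)
  have hb_gen := adjoin_eq_top_of_adjoin_add_inv_eq_top hgen
  refine eq_of_monic_of_dvd_of_natDegree_le ((minpoly.monic (hint b)).mul (minpoly.monic (hint _)))
    (monic_Qtrans (minpoly.monic (hint _)))
    (hcoprime.mul_dvd (hroot (by field_simp)) (hroot (by field_simp; ring))) ?_
  rw [(minpoly.monic (hint b)).natDegree_mul (minpoly.monic (hint _)),
    hdeg hb_gen, hdeg (adjoin_inv_eq_top hb_gen), ← two_mul, ← hdeg hgen]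
  exact natDegree_Qtrans_le _

theorem exists_Qtrans_minpoly_eq_mul (ha : (ZMod 2)⟮a⟯ = ⊤) (ha0 : a ≠ 0)
    (htr : Algebra.trace (ZMod 2) K a = 0) (htr_inv : Algebra.trace (ZMod 2) K a⁻¹ = 0) :
    ∃ b : K, b ≠ 0 ∧ (ZMod 2)⟮b⟯ = ⊤ ∧ minpoly (ZMod 2) b ≠ minpoly (ZMod 2) b⁻¹ ∧
      Algebra.trace (ZMod 2) K b⁻¹ = Algebra.trace (ZMod 2) K b ∧
      Qtrans (minpoly (ZMod 2) a) = minpoly (ZMod 2) b * minpoly (ZMod 2) b⁻¹ := by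
  have : Finite K := Module.finite_of_finite (ZMod 2)
  have : CharP K 2 := charP_of_injective_algebraMap' (ZMod 2) 2
  obtain ⟨b, rfl⟩ := exists_add_inv_eq ha0 htr_inv
  have hb : b ≠ b⁻¹ := fun h ↦ ha0 (CharTwo.add_eq_zero.mpr h)
  have hb0 : b ≠ 0 := fun h ↦ hb (by rw [h, inv_zero])
  refine ⟨b, hb0, adjoin_eq_top_of_adjoin_add_inv_eq_top ha, minpoly_ne_minpoly_inv ha hb, ?_,
    Qtrans_minpoly_add_inv ha hb⟩
  rw [map_add, CharTwo.add_eq_zero] at htr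
  exact htr.symm

end BinaryField

theorem stmt_5 (n : ℕ) (hn : 1 < n) (f : Polynomial (ZMod 2))
    (hmon : f.Monic) (hirr : Irreducible f) (hdeg : f.natDegree = n)
    (hD : f.coeff (n - 1) = 0 ∧ f.coeff 1 = 0) :
    ∃ g₁ g₂ : Polynomial (ZMod 2),
      Qtrans f = g₁ * g₂ ∧ g₁ ≠ g₂ ∧ g₂ = g₁.reverse ∧
      g₁.Monic ∧ Irreducible g₁ ∧ g₁.natDegree = n ∧
      g₂.Monic ∧ Irreducible g₂ ∧ g₂.natDegree = n ∧
      ((g₁.coeff (n - 1) = 1 ∧ g₁.coeff 1 = 1 ∧ g₂.coeff (n - 1) = 1 ∧ g₂.coeff 1 = 1) ∨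
       (g₁.coeff (n - 1) = 0 ∧ g₁.coeff 1 = 0 ∧ g₂.coeff (n - 1) = 0 ∧ g₂.coeff 1 = 0)) := by
  have : Fact (Irreducible f) := ⟨hirr⟩
  have : FiniteDimensional (ZMod 2) (AdjoinRoot f) := (AdjoinRoot.powerBasis hirr.ne_zero).finite
  have ha : (ZMod 2)⟮AdjoinRoot.root f⟯ = ⊤ := adjoin_root_eq_top f
  have hmin : minpoly (ZMod 2) (AdjoinRoot.root f) = f := by
    rw [AdjoinRoot.minpoly_root hirr.ne_zero, hmon.leadingCoeff, inv_one, C_1, mul_one]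
  have hgen {x : AdjoinRoot f} := (Field.primitive_element_iff_minpoly_natDegree_eq (ZMod 2) x).mp
  obtain rfl : Module.finrank (ZMod 2) (AdjoinRoot f) = n := by rw [← hgen ha, hmin, hdeg]
  have ha0 : AdjoinRoot.root f ≠ 0 :=
    ne_zero_of_one_lt_natDegree_minpoly (hmin.symm ▸ hdeg.symm ▸ hn)
  obtain ⟨b, hb0, hb, hne, htr, hmul⟩ := exists_Qtrans_minpoly_eq_mul ha ha0
    (by rw [← coeff_finrank_sub_one_minpoly_zmod_two ha, hmin, hD.1])
    (by rw [← coeff_one_minpoly_zmod_two ha ha0, hmin, hD.2])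
  rw [hmin] at hmul
  have hb' := adjoin_inv_eq_top hb
  have hint (x : AdjoinRoot f) : IsIntegral (ZMod 2) x := .of_finite _ x
  refine ⟨_, _, hmul, hne, minpoly_inv_zmod_two (hint b) hb0,
    minpoly.monic (hint b), minpoly.irreducible (hint b), hgen hb,
    minpoly.monic (hint b⁻¹), minpoly.irreducible (hint b⁻¹), hgen hb', ?_⟩
  rw [coeff_finrank_sub_one_minpoly_zmod_two hb, coeff_finrank_sub_one_minpoly_zmod_two hb',
    coeff_one_minpoly_zmod_two hb hb0, coeff_one_minpoly_zmod_two hb' (inv_ne_zero hb0),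
    inv_inv, htr]
  obtain h | h := eq_or_ne (Algebra.trace (ZMod 2) (AdjoinRoot f) b) 0
  · simp [h]
  · simp [eq_one_of_ne_zero_zmod_two h]
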